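/- Let (X,d) be a metric space and ν a Borel probability measure on X satisfying the Gaussian enlargement property with parameter τ > 0. Let A, B ⊆ X be Borel sets with D := d(A,B) > 0 and 0 < ν(A) < 1, 0 < ν(B) < 1. Then Φ⁻¹(ν(A)) + Φ⁻¹(ν(B)) ≤ -D/√(2τ); consequently ν(A)·ν(B) ≤ Φ(-D/(2√(2τ)))² ≤ exp(-D²/(8τ)). -/

import Mathlib

open Real MeasureTheory

/-- The standard Gaussian density. -/
noncomputable def gaussPdf (z : ℝ) : ℝ := (Real.sqrt (2 * Real.pi))⁻¹ * Real.exp (-z ^ 2 / 2)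

/-- The standard normal CDF. -/
noncomputable def Phi (r : ℝ) : ℝ := ∫ z in Set.Iic r, gaussPdf z

/-- The inverse of the standard normal CDF. -/
noncomputable def PhiInv : ℝ → ℝ := Function.invFun Phi

/-- The open `r`-enlargement `E_r = {y : d(y,E) < r}` of a set (with `E_0 = E`). -/
noncomputable def enlarge {X : Type*} [MetricSpace X] (E : Set X) (r : ℝ) : Set X :=
  if r = 0 then E else Metric.thickening r E

/-- A Borel probability measure `ν` on a metric space satisfies the Gaussian enlargement
property with parameter `τ > 0` if for every Borel set `E` with `0 < ν(E) < 1` and every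
`r ≥ 0`, `ν(E_r) ≥ Φ(Φ⁻¹(ν(E)) + r/√(2τ))`. -/
def GaussianEnlargement {X : Type*} [MetricSpace X] [MeasurableSpace X]
    (ν : Measure X) (τ : ℝ) : Prop :=
  ∀ E : Set X, MeasurableSet E → 0 < ν E → ν E < 1 → ∀ r : ℝ, 0 ≤ r →
    ENNReal.ofReal (Phi (PhiInv (ν E).toReal + r / Real.sqrt (2 * τ))) ≤ ν (enlarge E r)

/-- The distance `d(A,B) = inf {d(a,b) : a ∈ A, b ∈ B}` between two sets. -/
noncomputable def setDist {X : Type*} [MetricSpace X] (A B : Set X) : ℝ :=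
  sInf (Set.image2 dist A B)

/-!
Put `D = d(A, B)`. The open enlargement `A_D` is disjoint from `B`, so the enlargement property at
`r = D` gives `Φ(Φ⁻¹(ν A) + D / √(2τ)) ≤ 1 - ν B = Φ(-Φ⁻¹(ν B))`, and the bound on the sum of the
quantiles follows because `Φ` is strictly increasing. For arbitrary `A` the property is applied to
`closure A`, which has the same enlargements as `A`.

The product bound is the log-concavity of `Φ`: if `f` is positive and log-concave, then
`f (v) f (u + z) ≤ f (u) f (v + z)` for `u ≤ v` and `z ≤ 0`, and integrating over `z ≤ 0` shows that
the logarithmic derivative of `x ↦ ∫_{-∞}^x f` is antitone. The exponential bound is Chernoff's.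
-/

open ProbabilityTheory Set

section LogConcave

theorem map_add_map_le_of_concaveOn_of_mem_segment {𝕜 E β : Type*} [Semiring 𝕜] [PartialOrder 𝕜]
    [AddCommGroup E] [Module 𝕜 E] [AddCommMonoid β] [PartialOrder β] [IsOrderedAddMonoid β]
    [Module 𝕜 β] {s : Set E} {g : E → β} (hg : ConcaveOn 𝕜 s g) {a b x y : E}
    (ha : a ∈ s) (hb : b ∈ s) (hx : x ∈ segment 𝕜 a b) (hxy : x + y = a + b) :
    g a + g b ≤ g x + g y := by
  obtain ⟨p, q, hp, hq, hpq, rfl⟩ := hx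
  have hy : y = q • a + p • b := by
    have hsum : (p • a + q • b) + (q • a + p • b) = a + b := by
      rw [add_add_add_comm, ← add_smul, ← add_smul, add_comm q p, hpq, one_smul, one_smul]
    exact add_left_cancel (hxy.trans hsum.symm)
  calc g a + g b = (p • g a + q • g b) + (q • g a + p • g b) := by
        rw [add_add_add_comm, ← add_smul, ← add_smul, add_comm q p, hpq, one_smul, one_smul]
    _ ≤ g (p • a + q • b) + g y := by
        rw [hy]
        exact add_le_add (hg.2 ha hb hp hq hpq) (hg.2 ha hb hq hp ((add_comm q p).trans hpq))

theorem hasDerivAt_integral_Iic {E : Type*} [NormedAddCommGroup E] [NormedSpace ℝ E]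
    [CompleteSpace E] {f : ℝ → E} (hf : Integrable f) {x : ℝ} (hx : ContinuousAt f x) :
    HasDerivAt (fun y ↦ ∫ z in Iic y, f z) (f x) x := by
  have hsplit : (fun y ↦ ∫ z in Iic y, f z) =
      fun y ↦ (∫ z in Iic x, f z) + ∫ z in x..y, f z := by
    funext y
    rw [← intervalIntegral.integral_Iic_sub_Iic hf.integrableOn hf.integrableOn,
      add_sub_cancel]
  rw [hsplit]
  exact (intervalIntegral.integral_hasDerivAt_right hf.intervalIntegrable
    hf.aestronglyMeasurable.stronglyMeasurableAtFilter hx).const_add _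

theorem setIntegral_Iic_eq_setIntegral_Iic_zero {E : Type*} [NormedAddCommGroup E]
    [NormedSpace ℝ E] (f : ℝ → E) (x : ℝ) :
    ∫ z in Iic x, f z = ∫ z in Iic 0, f (x + z) := by
  rw [← (measurePreserving_add_left volume x).setIntegral_preimage_emb
    (measurableEmbedding_addLeft x) f (Iic x)]
  simp

variable {f : ℝ → ℝ}

theorem continuous_of_concaveOn_log (hpos : ∀ x, 0 < f x)
    (hlog : ConcaveOn ℝ univ fun x ↦ log (f x)) : Continuous f := by
  have hcont : Continuous fun x ↦ log (f x) :=
    continuousOn_univ.1 (hlog.continuousOn isOpen_univ)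
  exact (continuous_exp.comp hcont).congr fun x ↦ exp_log (hpos x)

theorem integral_Iic_pos (hpos : ∀ x, 0 < f x) (hf : Integrable f) (x : ℝ) :
    0 < ∫ z in Iic x, f z := by
  have hsupp : Function.support f = univ := eq_univ_of_forall fun z ↦ (hpos z).ne'
  rw [setIntegral_pos_iff_support_of_nonneg_ae (ae_of_all _ fun z ↦ (hpos z).le)
    hf.integrableOn, hsupp, univ_inter, volume_Iic]
  exact ENNReal.zero_lt_top

theorem mul_le_mul_of_concaveOn_log (hpos : ∀ x, 0 < f x)
    (hlog : ConcaveOn ℝ univ fun x ↦ log (f x)) {u v z : ℝ} (huv : u ≤ v) (hz : z ≤ 0) :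
    f v * f (u + z) ≤ f u * f (v + z) := by
  have hseg : u ∈ segment ℝ (u + z) v := by
    rw [segment_eq_Icc (by linarith)]
    exact ⟨by linarith, huv⟩
  have hsum : log (f (u + z)) + log (f v) ≤ log (f u) + log (f (v + z)) :=
    map_add_map_le_of_concaveOn_of_mem_segment hlog (mem_univ _) (mem_univ _) hseg (by ring)
  rwa [← log_mul (hpos _).ne' (hpos _).ne', ← log_mul (hpos _).ne' (hpos _).ne',
    log_le_log_iff (mul_pos (hpos _) (hpos _)) (mul_pos (hpos _) (hpos _)), mul_comm] at hsum

theorem antitone_div_integral_Iic (hpos : ∀ x, 0 < f x) (hf : Integrable f)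
    (hlog : ConcaveOn ℝ univ fun x ↦ log (f x)) :
    Antitone fun x ↦ f x / ∫ z in Iic x, f z := by
  intro u v huv
  rw [div_le_div_iff₀ (integral_Iic_pos hpos hf v) (integral_Iic_pos hpos hf u),
    setIntegral_Iic_eq_setIntegral_Iic_zero f u, setIntegral_Iic_eq_setIntegral_Iic_zero f v,
    ← integral_const_mul, ← integral_const_mul]
  exact setIntegral_mono_on ((hf.comp_add_left u).const_mul _).integrableOn
    ((hf.comp_add_left v).const_mul _).integrableOn measurableSet_Iic
    fun z hz ↦ mul_le_mul_of_concaveOn_log hpos hlog huv hz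

theorem concaveOn_log_integral_Iic (hpos : ∀ x, 0 < f x) (hf : Integrable f)
    (hlog : ConcaveOn ℝ univ fun x ↦ log (f x)) :
    ConcaveOn ℝ univ fun x ↦ log (∫ z in Iic x, f z) := by
  have hderiv (x : ℝ) :
      HasDerivAt (fun x ↦ log (∫ z in Iic x, f z)) (f x / ∫ z in Iic x, f z) x :=
    (hasDerivAt_integral_Iic hf (continuous_of_concaveOn_log hpos hlog).continuousAt).log
      (integral_Iic_pos hpos hf x).ne'
  refine Antitone.concaveOn_univ_of_deriv (fun x ↦ (hderiv x).differentiableAt) ?_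
  rw [funext fun x ↦ (hderiv x).deriv]
  exact antitone_div_integral_Iic hpos hf hlog

end LogConcave

section StandardNormal

theorem gaussPdf_eq_gaussianPDFReal : gaussPdf = gaussianPDFReal 0 1 := by
  funext z
  simp [gaussPdf, gaussianPDFReal]

theorem gaussPdf_pos (z : ℝ) : 0 < gaussPdf z := by
  rw [gaussPdf_eq_gaussianPDFReal]
  exact gaussianPDFReal_pos 0 1 z one_ne_zero

theorem integrable_gaussPdf : Integrable gaussPdf := by
  rw [gaussPdf_eq_gaussianPDFReal]
  exact integrable_gaussianPDFReal 0 1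

theorem concaveOn_log_gaussPdf : ConcaveOn ℝ univ fun z ↦ log (gaussPdf z) := by
  have hlog : (fun z ↦ log (gaussPdf z)) =
      fun z ↦ -((2⁻¹ : ℝ) • z ^ 2) + log (√(2 * π))⁻¹ := by
    funext z
    rw [gaussPdf, log_mul (by positivity) (exp_ne_zero _), log_exp, smul_eq_mul]
    ring
  rw [hlog]
  exact ((even_two.convexOn_pow.smul (by norm_num)).neg).add_const _

theorem Phi_eq_cdf : Phi = cdf (gaussianReal 0 1) := by
  funext x
  rw [cdf_eq_real, measureReal_def, gaussianReal_apply_eq_integral 0 one_ne_zero,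
    ← gaussPdf_eq_gaussianPDFReal, ENNReal.toReal_ofReal, Phi]
  exact setIntegral_nonneg measurableSet_Iic fun z _ ↦ (gaussPdf_pos z).le

theorem hasDerivAt_Phi (x : ℝ) : HasDerivAt Phi (gaussPdf x) x :=
  hasDerivAt_integral_Iic integrable_gaussPdf
    (continuous_of_concaveOn_log gaussPdf_pos concaveOn_log_gaussPdf).continuousAt

theorem continuous_Phi : Continuous Phi :=
  continuous_iff_continuousAt.2 fun x ↦ (hasDerivAt_Phi x).continuousAt

theorem strictMono_Phi : StrictMono Phi :=
  strictMono_of_hasDerivAt_pos hasDerivAt_Phi gaussPdf_pos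

theorem Phi_pos (x : ℝ) : 0 < Phi x :=
  integral_Iic_pos gaussPdf_pos integrable_gaussPdf x

theorem Phi_neg (x : ℝ) : Phi (-x) = 1 - Phi x := by
  have hupper : Phi (-x) = ∫ z in Ioi x, gaussPdf z := by
    rw [Phi, ← integral_comp_neg_Ioi]
    simp only [gaussPdf, neg_sq]
  have htotal : Phi x + ∫ z in Ioi x, gaussPdf z = 1 := by
    rw [Phi, intervalIntegral.integral_Iic_add_Ioi integrable_gaussPdf.integrableOn
      integrable_gaussPdf.integrableOn, gaussPdf_eq_gaussianPDFReal,
      integral_gaussianPDFReal_eq_one 0 one_ne_zero]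
  rw [hupper, ← htotal, add_sub_cancel_left]

theorem Phi_le_exp {x : ℝ} (hx : x ≤ 0) : Phi x ≤ exp (-x ^ 2 / 2) := by
  have hchernoff : Phi x ≤ exp (-x * x) * mgf id (gaussianReal 0 1) x := by
    rw [Phi_eq_cdf, cdf_eq_real]
    exact measure_le_le_exp_mul_mgf x hx (integrable_exp_mul_gaussianReal x)
  calc Phi x ≤ exp (-x * x) * exp (x ^ 2 / 2) := by
        simpa [mgf_id_gaussianReal] using hchernoff
    _ = exp (-x ^ 2 / 2) := by
        rw [← exp_add]
        ring_nf

theorem Phi_sq_le_exp {x : ℝ} (hx : x ≤ 0) : Phi x ^ 2 ≤ exp (-x ^ 2) :=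
  calc Phi x ^ 2 ≤ exp (-x ^ 2 / 2) ^ 2 := pow_le_pow_left₀ (Phi_pos x).le (Phi_le_exp hx) 2
    _ = exp (-x ^ 2) := by
        rw [← exp_nat_mul]
        ring_nf

theorem Phi_mul_Phi_le_sq (a b : ℝ) : Phi a * Phi b ≤ Phi ((a + b) / 2) ^ 2 := by
  have hconc : ConcaveOn ℝ univ fun x ↦ log (Phi x) :=
    concaveOn_log_integral_Iic gaussPdf_pos integrable_gaussPdf concaveOn_log_gaussPdf
  have hmid : (a + b) / 2 ∈ segment ℝ a b := by
    simpa only [midpoint_eq_smul_add, invOf_eq_inv, smul_eq_mul, div_eq_inv_mul] using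
      midpoint_mem_segment (𝕜 := ℝ) a b
  have hlog : log (Phi a) + log (Phi b) ≤ log (Phi ((a + b) / 2)) + log (Phi ((a + b) / 2)) :=
    map_add_map_le_of_concaveOn_of_mem_segment hconc (mem_univ _) (mem_univ _) hmid
      (add_halves (a + b))
  rwa [← log_mul (Phi_pos _).ne' (Phi_pos _).ne', ← log_mul (Phi_pos _).ne' (Phi_pos _).ne',
    log_le_log_iff (mul_pos (Phi_pos _) (Phi_pos _)) (mul_pos (Phi_pos _) (Phi_pos _)),
    ← sq] at hlog

theorem Phi_PhiInv {p : ℝ} (hp : p ∈ Ioo 0 1) : Phi (PhiInv p) = p := by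
  have hbot : ∃ x, Phi x ≤ p := by
    rw [Phi_eq_cdf]
    exact ((tendsto_cdf_atBot _).eventually_le_const hp.1).exists
  have htop : ∃ x, p ≤ Phi x := by
    rw [Phi_eq_cdf]
    exact ((tendsto_cdf_atTop _).eventually_const_le hp.2).exists
  exact Function.invFun_eq (mem_range_of_exists_le_of_exists_ge continuous_Phi hbot htop)

theorem monotoneOn_PhiInv : MonotoneOn PhiInv (Ioo 0 1) := by
  intro p hp q hq hpq
  rwa [← strictMono_Phi.le_iff_le, Phi_PhiInv hp, Phi_PhiInv hq]

theorem mul_le_Phi_sq_of_PhiInv_add_PhiInv_le {p q c : ℝ} (hp : p ∈ Ioo 0 1) (hq : q ∈ Ioo 0 1)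
    (h : PhiInv p + PhiInv q ≤ c) : p * q ≤ Phi (c / 2) ^ 2 :=
  calc p * q = Phi (PhiInv p) * Phi (PhiInv q) := by rw [Phi_PhiInv hp, Phi_PhiInv hq]
    _ ≤ Phi ((PhiInv p + PhiInv q) / 2) ^ 2 := Phi_mul_Phi_le_sq _ _
    _ ≤ Phi (c / 2) ^ 2 :=
        pow_le_pow_left₀ (Phi_pos _).le (strictMono_Phi.monotone (by linarith)) 2

end StandardNormal

section Enlargement

section Measure

variable {Ω : Type*} [MeasurableSpace Ω] {ν : Measure Ω} {S T : Set Ω}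

theorem measureReal_mem_Ioo (hS0 : 0 < ν S) (hS1 : ν S < 1) : ν.real S ∈ Ioo 0 1 :=
  ⟨ENNReal.toReal_pos hS0.ne' hS1.ne_top,
    ENNReal.toReal_lt_of_lt_ofReal (by rwa [ENNReal.ofReal_one])⟩

theorem measure_lt_one_of_disjoint [IsProbabilityMeasure ν] (hT : MeasurableSet T)
    (hST : Disjoint S T) (hT0 : 0 < ν T) : ν S < 1 :=
  calc ν S ≤ ν Tᶜ := measure_mono hST.subset_compl_right
    _ < 1 := by simpa only [tsub_zero] using prob_compl_lt_one_sub_of_lt_prob hT0 hT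

end Measure

variable {X : Type*} [MetricSpace X]

theorem disjoint_thickening_setDist (A B : Set X) :
    Disjoint (Metric.thickening (setDist A B) A) B := by
  rw [disjoint_left]
  intro b hbA hb
  obtain ⟨a, ha, hba⟩ := Metric.mem_thickening_iff.1 hbA
  have hle : setDist A B ≤ dist a b :=
    csInf_le ⟨0, forall_mem_image2.2 fun _ _ _ _ ↦ dist_nonneg⟩ (mem_image2_of_mem ha hb)
  exact (hba.trans_le hle).ne (dist_comm b a)

variable {r : ℝ} {A B : Set X}

theorem disjoint_closure_of_disjoint_thickening (hr : 0 < r)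
    (hAB : Disjoint (Metric.thickening r A) B) : Disjoint (closure A) (closure B) :=
  (hAB.closure_right Metric.isOpen_thickening).mono_left (Metric.closure_subset_thickening hr A)

variable [MeasurableSpace X] [OpensMeasurableSpace X] {ν : Measure X} {τ : ℝ}

theorem GaussianEnlargement.Phi_add_le_measureReal_thickening [IsFiniteMeasure ν]
    (hν : GaussianEnlargement ν τ) (hr : 0 < r) (hA0 : 0 < ν A) (hA1 : ν (closure A) < 1) :
    Phi (PhiInv (ν.real A) + r / √(2 * τ)) ≤ ν.real (Metric.thickening r A) := by
  have hle : ν A ≤ ν (closure A) := measure_mono subset_closure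
  have hcl0 : 0 < ν (closure A) := hA0.trans_le hle
  have hPhiInv : PhiInv (ν.real A) ≤ PhiInv (ν.real (closure A)) :=
    monotoneOn_PhiInv (measureReal_mem_Ioo hA0 (hle.trans_lt hA1))
      (measureReal_mem_Ioo hcl0 hA1) (measureReal_mono subset_closure)
  have henlarge := hν (closure A) isClosed_closure.measurableSet hcl0 hA1 r hr.le
  rw [enlarge, if_neg hr.ne', Metric.thickening_closure] at henlarge
  calc Phi (PhiInv (ν.real A) + r / √(2 * τ))
      ≤ Phi (PhiInv (ν.real (closure A)) + r / √(2 * τ)) :=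
        strictMono_Phi.monotone (add_le_add_left hPhiInv _)
    _ ≤ ν.real (Metric.thickening r A) :=
        (ENNReal.ofReal_le_iff_le_toReal (measure_ne_top _ _)).1 henlarge

theorem GaussianEnlargement.PhiInv_add_PhiInv_le [IsProbabilityMeasure ν]
    (hν : GaussianEnlargement ν τ) (hr : 0 < r)
    (hAB : Disjoint (Metric.thickening r A) B) (hA0 : 0 < ν A) (hA1 : ν (closure A) < 1)
    (hB : ν.real B ∈ Ioo 0 1) :
    PhiInv (ν.real A) + PhiInv (ν.real B) ≤ -r / √(2 * τ) := by
  have hsum : ν.real (Metric.thickening r A) + ν.real B ≤ 1 := by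
    rw [← measureReal_union' hAB Metric.isOpen_thickening.measurableSet]
    exact measureReal_le_one
  have hPhi : Phi (PhiInv (ν.real A) + r / √(2 * τ)) ≤ Phi (-PhiInv (ν.real B)) :=
    calc Phi (PhiInv (ν.real A) + r / √(2 * τ))
        ≤ ν.real (Metric.thickening r A) := hν.Phi_add_le_measureReal_thickening hr hA0 hA1
      _ ≤ 1 - ν.real B := le_sub_iff_add_le.2 hsum
      _ = Phi (-PhiInv (ν.real B)) := by rw [Phi_neg, Phi_PhiInv hB]
  have hle := strictMono_Phi.le_iff_le.1 hPhi
  rw [neg_div]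
  linarith

end Enlargement

theorem stmt11_general {X : Type*} [MetricSpace X] [MeasurableSpace X] [OpensMeasurableSpace X]
    (ν : Measure X) [IsProbabilityMeasure ν] (τ : ℝ) (hτ : 0 < τ)
    (hGEP : GaussianEnlargement ν τ) (A B : Set X) (hD : 0 < setDist A B)
    (hA0 : 0 < ν A) (hB0 : 0 < ν B) :
    PhiInv (ν A).toReal + PhiInv (ν B).toReal ≤ -(setDist A B) / √(2 * τ) ∧
    (ν A).toReal * (ν B).toReal ≤ Phi (-(setDist A B) / (2 * √(2 * τ))) ^ 2 ∧
    Phi (-(setDist A B) / (2 * √(2 * τ))) ^ 2 ≤ exp (-(setDist A B) ^ 2 / (8 * τ)) := by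
  have hAB := disjoint_thickening_setDist A B
  have hcl := disjoint_closure_of_disjoint_thickening hD hAB
  have hclA1 : ν (closure A) < 1 :=
    measure_lt_one_of_disjoint isClosed_closure.measurableSet hcl
      (hB0.trans_le (measure_mono subset_closure))
  have hB1 : ν B < 1 :=
    measure_lt_one_of_disjoint isClosed_closure.measurableSet (hcl.symm.mono_left subset_closure)
      (hA0.trans_le (measure_mono subset_closure))
  have hA := measureReal_mem_Ioo hA0 ((measure_mono subset_closure).trans_lt hclA1)
  have hB := measureReal_mem_Ioo hB0 hB1
  have hsum := hGEP.PhiInv_add_PhiInv_le hD hAB hA0 hclA1 hB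
  refine ⟨hsum, ?_, ?_⟩
  · rw [mul_comm 2 √(2 * τ), ← div_div]
    exact mul_le_Phi_sq_of_PhiInv_add_PhiInv_le hA hB hsum
  · have hexponent : -(-(setDist A B) / (2 * √(2 * τ))) ^ 2 = -(setDist A B) ^ 2 / (8 * τ) := by
      rw [div_pow, mul_pow, sq_sqrt (by positivity)]
      ring
    rw [← hexponent]
    exact Phi_sq_le_exp (div_nonpos_of_nonpos_of_nonneg (by linarith) (by positivity))

/-- Two-set concentration: if `ν` satisfies the Gaussian enlargement property with
parameter `τ`, and `A, B` are Borel sets with `d(A,B) > 0` and measures in `(0,1)`, then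
`Φ⁻¹(ν(A)) + Φ⁻¹(ν(B)) ≤ -d(A,B)/√(2τ)`; consequently
`ν(A)ν(B) ≤ Φ(-d(A,B)/(2√(2τ)))² ≤ exp(-d(A,B)²/(8τ))`. -/
theorem stmt11 {X : Type*} [MetricSpace X] [MeasurableSpace X] [BorelSpace X]
    (ν : Measure X) [IsProbabilityMeasure ν] (τ : ℝ) (hτ : 0 < τ)
    (hGEP : GaussianEnlargement ν τ)
    (A B : Set X) (hA : MeasurableSet A) (hB : MeasurableSet B)
    (hD : 0 < setDist A B)
    (hA0 : 0 < ν A) (hA1 : ν A < 1) (hB0 : 0 < ν B) (hB1 : ν B < 1) :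
    PhiInv (ν A).toReal + PhiInv (ν B).toReal ≤ -(setDist A B) / Real.sqrt (2 * τ) ∧
    (ν A).toReal * (ν B).toReal ≤ (Phi (-(setDist A B) / (2 * Real.sqrt (2 * τ)))) ^ 2 ∧
    (Phi (-(setDist A B) / (2 * Real.sqrt (2 * τ)))) ^ 2 ≤
      Real.exp (-(setDist A B) ^ 2 / (8 * τ)) :=
  stmt11_general ν τ hτ hGEP A B hD hA0 hB0
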